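/- arXiv:1510.08740 — 2 statements merged into one kernel-verified Lean document; each statement's English description precedes it below -/
import Mathlib

section
/- Let H be a real Hilbert space, Ψ : H → ℝ ∪ {+∞} proper, lower-semicontinuous and convex, and Φ : H → ℝ convex and continuously differentiable with L-Lipschitz continuous gradient. Suppose S = argmin(Ψ + Φ) is nonempty, and let (x_k) be generated by the accelerated forward-backward algorithm with parameter α > 3 and step size 0 < s < 1/L. Then the sequence (x_k) converges weakly to a point of S. -/
open Filter RealInnerProductSpace

open Asymptotics Finset Set
open scoped NNReal Topology

/-!
Each forward-backward step from `y` to `x⁺` satisfies the three-point inequality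
`2sΘ(x⁺) + ‖x⁺ - u‖² ≤ 2sΘ(u) + ‖y - u‖²`. Write the momentum coefficient as
`(t k - 1) / t (k + 1)`. Combining the inequality at a minimizer `u = z` and at the previous iterate
makes `‖v k - z‖² + t k ² (F (x (k + 1)) - F z)` decrease, with `F = 2sΘ` and
`v k = x k + t k (x (k + 1) - x k)`. When `t (k + 1)² - t (k + 1) ≤ t k ² - c t k` with `c > 0`,
as happens for `α > 3`, the decrease is at least `c t k (F (x (k + 1)) - F z)`, so these terms are
summable. The inequality at the previous iterate alone then bounds
`t k ² (‖x (k + 1) - x k‖² + F (x (k + 1)) - F z)` up to a summable error. This quantity converges,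
and since its sum against `1 / t k` is finite while `∑ 1 / t k` diverges, its limit is `0`.
Hence `F (x k)` tends to the minimum, `v k - x (k + 1)` tends to `0` and `‖x k - z‖` converges for
every minimizer `z`. Opial's lemma concludes, because sublevel sets of `F` are weakly closed.
-/

section RealSequences

variable {a b e w f : ℕ → ℝ} {l : ℝ}

lemma exists_tendsto_of_succ_le_add (ha : ∀ n, 0 ≤ a n) (he : Summable e)
    (h : ∀ n, a (n + 1) ≤ a n + e n) : ∃ l, Tendsto a atTop (𝓝 l) := by
  have hsum : Tendsto (fun n => ∑ i ∈ range n, e i) atTop (𝓝 (∑' i, e i)) :=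
    he.hasSum.tendsto_sum_nat
  have hanti : Antitone fun n => a n - ∑ i ∈ range n, e i := antitone_nat_of_succ_le fun n => by
    rw [sum_range_succ]; linarith [h n]
  obtain ⟨C, hC⟩ := hsum.bddAbove_range
  have hbdd : BddBelow (Set.range fun n => a n - ∑ i ∈ range n, e i) :=
    ⟨-C, by rintro _ ⟨n, rfl⟩; linarith [ha n, hC ⟨n, rfl⟩]⟩
  exact ⟨_, ((tendsto_atTop_ciInf hanti hbdd).add hsum).congr fun n => sub_add_cancel _ _⟩

lemma summable_of_succ_add_le_add (ha : ∀ n, 0 ≤ a n) (hb : ∀ n, 0 ≤ b n) (he : Summable e)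
    (h : ∀ n, a (n + 1) + b n ≤ a n + e n) : Summable b := by
  obtain ⟨C, hC⟩ := he.hasSum.tendsto_sum_nat.bddAbove_range
  have htelescope : ∀ n, a n + ∑ i ∈ range n, b i ≤ a 0 + ∑ i ∈ range n, e i := by
    intro n
    induction n with
    | zero => simp
    | succ n ih => rw [sum_range_succ, sum_range_succ]; linarith [h n]
  exact summable_of_sum_range_le (c := a 0 + C) hb fun n => by
    linarith [htelescope n, ha n, hC ⟨n, rfl⟩]

lemma eq_zero_of_tendsto_of_summable_mul (hw : ¬ Summable w) (hf : Tendsto f atTop (𝓝 l))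
    (h : Summable fun n => w n * f n) : l = 0 := by
  by_contra hl
  have hO : (fun n => w n * f n * (f n)⁻¹) =O[atTop] fun n => w n * f n * 1 :=
    (isBigO_refl _ _).mul ((hf.inv₀ hl).isBigO_one ℝ)
  refine hw (summable_of_isBigO_nat h ((hO.congr' ?_ (.of_eq (by simp)))))
  filter_upwards [hf.eventually_ne hl] with n hn
  exact mul_inv_cancel_right₀ hn _

end RealSequences

section WeakConvergence

variable {ι H : Type*} [NormedAddCommGroup H] [InnerProductSpace ℝ H]
  {x : ι → H} {l : Filter ι} {p q : H} {C S : Set H}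

/-- Weak convergence `x ⇀ p` along `l` in a real inner product space, tested against the
functionals `⟪·, v⟫`, which exhaust the dual when the space is complete. -/
def WeakTendsto (x : ι → H) (l : Filter ι) (p : H) : Prop :=
  ∀ v : H, Tendsto (fun i => ⟪x i, v⟫) l (𝓝 ⟪p, v⟫)

lemma WeakTendsto.eq_of_tendsto_norm_sub {l₁ l₂ : Filter ι} [NeBot l₁] [NeBot l₂]
    (hp : WeakTendsto x l₁ p) (hq : WeakTendsto x l₂ q) (h₁ : l₁ ≤ l) (h₂ : l₂ ≤ l) {a b : ℝ}
    (ha : Tendsto (fun i => ‖x i - p‖) l (𝓝 a)) (hb : Tendsto (fun i => ‖x i - q‖) l (𝓝 b)) :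
    p = q := by
  have hinner : Tendsto (fun i => ⟪x i, p - q⟫) l
      (𝓝 ((‖p‖ ^ 2 - ‖q‖ ^ 2 - (a ^ 2 - b ^ 2)) / 2)) := by
    refine ((((ha.pow 2).sub (hb.pow 2)).const_sub (‖p‖ ^ 2 - ‖q‖ ^ 2)).div_const 2).congr
      fun i => ?_
    rw [norm_sub_sq_real, norm_sub_sq_real, inner_sub_right]
    ring
  have hpq : ⟪p, p - q⟫ = ⟪q, p - q⟫ :=
    (tendsto_nhds_unique (hp _) (hinner.mono_left h₁)).trans
      (tendsto_nhds_unique (hq _) (hinner.mono_left h₂)).symm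
  rw [← sub_eq_zero, ← inner_self_eq_zero (𝕜 := ℝ), inner_sub_left, hpq, sub_self]

variable [CompleteSpace H]

lemma WeakTendsto.mem_of_convex_of_isClosed [NeBot l] (h : WeakTendsto x l p) (hC : Convex ℝ C)
    (hclosed : IsClosed C) (hx : ∀ᶠ i in l, x i ∈ C) : p ∈ C := by
  by_contra hp
  obtain ⟨g, r, hg, hr⟩ := geometric_hahn_banach_closed_point hC hclosed hp
  have riesz : ∀ u, ⟪u, (InnerProductSpace.toDual ℝ H).symm g⟫ = g u := fun u => by
    rw [real_inner_comm, InnerProductSpace.toDual_symm_apply]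
  have hlim : Tendsto (fun i => g (x i)) l (𝓝 (g p)) := by
    simpa only [riesz] using h ((InnerProductSpace.toDual ℝ H).symm g)
  exact hr.not_ge (le_of_tendsto hlim (hx.mono fun i hi => (hg _ hi).le))

lemma WeakTendsto.mem_and_le_of_quasiconvexOn [NeBot l] {D : Set H} {F : H → ℝ} {m : ℝ}
    (h : WeakTendsto x l p) (hF : QuasiconvexOn ℝ D F) (hclosed : ∀ r, IsClosed {u ∈ D | F u ≤ r})
    (hx : ∀ᶠ i in l, x i ∈ D) (hlim : Tendsto (fun i => F (x i)) l (𝓝 m)) : p ∈ D ∧ F p ≤ m := by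
  have hsublevel : ∀ ε > 0, p ∈ {u ∈ D | F u ≤ m + ε} := fun ε hε =>
    h.mem_of_convex_of_isClosed (hF _) (hclosed _)
      (hx.and (hlim.eventually_le_const (lt_add_of_pos_right m hε)))
  exact ⟨(hsublevel 1 one_pos).1, le_of_forall_pos_le_add fun ε hε => (hsublevel ε hε).2⟩

lemma exists_weakTendsto_ultrafilter {U : Ultrafilter ι} {R : ℝ}
    (hR : ∀ᶠ i in (U : Filter ι), ‖x i‖ ≤ R) : ∃ p, WeakTendsto x U p := by
  let ξ : ι → WeakDual ℝ H := fun i => StrongDual.toWeakDual (InnerProductSpace.toDual ℝ H (x i))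
  have hball : ∀ᶠ i in (U : Filter ι),
      ξ i ∈ WeakDual.toStrongDual ⁻¹' Metric.closedBall (0 : StrongDual ℝ H) R := by
    filter_upwards [hR] with i hi
    rw [Set.mem_preimage, mem_closedBall_zero_iff]
    exact ((InnerProductSpace.toDual ℝ H).norm_map (x i)).trans_le hi
  obtain ⟨φ, -, hφ⟩ :=
    (WeakDual.isCompact_closedBall (0 : StrongDual ℝ H) R).ultrafilter_le_nhds' (U.map ξ) hball
  refine ⟨(InnerProductSpace.toDual ℝ H).symm (WeakDual.toStrongDual φ), fun v => ?_⟩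
  rw [InnerProductSpace.toDual_symm_apply]
  exact ((WeakDual.eval_continuous v).tendsto φ).comp hφ

theorem opial [NeBot l] (hS : S.Nonempty)
    (hnorm : ∀ z ∈ S, ∃ r, Tendsto (fun i => ‖x i - z‖) l (𝓝 r))
    (hcluster : ∀ (U : Ultrafilter ι) (p : H), ↑U ≤ l → WeakTendsto x U p → p ∈ S) :
    ∃ p ∈ S, WeakTendsto x l p := by
  obtain ⟨R, hR⟩ : ∃ R, ∀ᶠ i in l, ‖x i‖ ≤ R := by
    obtain ⟨z, hz⟩ := hS
    obtain ⟨r, hr⟩ := hnorm z hz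
    refine ⟨r + 1 + ‖z‖, (hr.eventually_le_const (lt_add_one r)).mono fun i hi => ?_⟩
    linarith [norm_le_norm_sub_add (x i) z]
  have hexists (U : Ultrafilter ι) (hU : ↑U ≤ l) : ∃ p ∈ S, WeakTendsto x U p := by
    obtain ⟨p, hp⟩ := exists_weakTendsto_ultrafilter (hU hR)
    exact ⟨p, hcluster U p hU hp, hp⟩
  obtain ⟨p, hpS, hp⟩ := hexists (Ultrafilter.of l) (Ultrafilter.of_le l)
  refine ⟨p, hpS, fun v => (tendsto_iff_ultrafilter _ _ _).2 fun V hV => ?_⟩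
  obtain ⟨q, hqS, hq⟩ := hexists V hV
  obtain ⟨a, ha⟩ := hnorm p hpS
  obtain ⟨b, hb⟩ := hnorm q hqS
  rw [hp.eq_of_tendsto_norm_sub hq (Ultrafilter.of_le l) hV ha hb]
  exact hq v

end WeakConvergence

section ConvexAnalysis

lemma add_modulus_le_of_isMinOn {E : Type*} [NormedAddCommGroup E] [NormedSpace ℝ E] {D : Set E}
    {f : E → ℝ} {φ : ℝ → ℝ} {p u : E} (hf : UniformConvexOn D φ f) (hmin : IsMinOn f D p)
    (hp : p ∈ D) (hu : u ∈ D) : f p + φ ‖p - u‖ ≤ f u := by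
  have hsegment : ∀ τ ∈ Ioo (0 : ℝ) 1, f p + (1 - τ) * φ ‖p - u‖ ≤ f u := by
    rintro τ ⟨h0, h1⟩
    have hτ : 0 ≤ 1 - τ := by linarith
    have hle := (hmin (hf.1 hp hu hτ h0.le (by ring))).trans
      (hf.2 hp hu hτ h0.le (by ring))
    simp only [smul_eq_mul] at hle
    refine le_of_mul_le_mul_left ?_ h0
    linarith
  have hlim : Tendsto (fun τ : ℝ => f p + (1 - τ) * φ ‖p - u‖) (𝓝[>] 0)
      (𝓝 (f p + (1 - 0) * φ ‖p - u‖)) :=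
    (Continuous.tendsto (by fun_prop) 0).mono_left nhdsWithin_le_nhds
  rw [sub_zero, one_mul] at hlim
  exact le_of_tendsto hlim (mem_of_superset (Ioo_mem_nhdsGT one_pos) hsegment)

variable {H : Type*} [NormedAddCommGroup H] [InnerProductSpace ℝ H]

lemma norm_sq_smul_add_smul_sub {a b : ℝ} (hab : a + b = 1) (u v w : H) :
    ‖a • u + b • v - w‖ ^ 2 = a * ‖u - w‖ ^ 2 + b * ‖v - w‖ ^ 2 - a * b * ‖u - v‖ ^ 2 := by
  have hcentre : a • u + b • v - w = a • (u - w) + b • (v - w) := by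
    rw [smul_sub, smul_sub, sub_add_sub_comm, ← add_smul, hab, one_smul]
  rw [hcentre, ← sub_sub_sub_cancel_right u v w, norm_add_sq_real, norm_sub_sq_real (u - w),
    norm_smul, norm_smul, real_inner_smul_left, real_inner_smul_right, mul_pow, mul_pow,
    Real.norm_eq_abs, Real.norm_eq_abs, sq_abs, sq_abs]
  obtain rfl : b = 1 - a := by linarith
  ring

lemma strongConvexOn_add_norm_sub_sq {D : Set H} {f : H → ℝ} (hf : ConvexOn ℝ D f) (m : ℝ)
    (w : H) : StrongConvexOn D m fun u => f u + m / 2 * ‖u - w‖ ^ 2 := by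
  refine ⟨hf.1, fun u hu v hv a b ha hb hab => ?_⟩
  have hconv := hf.2 hu hv ha hb hab
  simp only [smul_eq_mul] at hconv ⊢
  rw [norm_sq_smul_add_smul_sub hab]
  linarith

variable [CompleteSpace H] {Φ : H → ℝ} {Φ' : H → H} {K : ℝ≥0}

lemma hasDerivAt_comp_add_smul {g u d : H} {τ : ℝ} (h : HasGradientAt Φ g (u + τ • d)) :
    HasDerivAt (fun r : ℝ => Φ (u + r • d)) ⟪g, d⟫ τ := by
  have hline : HasDerivAt (fun r : ℝ => u + r • d) d τ := by
    simpa using ((hasDerivAt_id τ).smul_const d).const_add u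
  simpa [Function.comp_def] using h.hasFDerivAt.comp_hasDerivAt τ hline

lemma add_inner_gradient_le_of_convexOn {D : Set H} {g u v : H} (hΦ : ConvexOn ℝ D Φ)
    (hg : HasGradientAt Φ g u) (hu : u ∈ D) (hv : v ∈ D) : Φ u + ⟪g, v - u⟫ ≤ Φ v := by
  have hline : ConvexOn ℝ (AffineMap.lineMap (k := ℝ) u v ⁻¹' D)
      fun τ : ℝ => Φ (u + τ • (v - u)) := by
    simpa [Function.comp_def, AffineMap.lineMap_apply, add_comm] using
      hΦ.comp_affineMap (AffineMap.lineMap (k := ℝ) u v)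
  have hderiv : HasDerivAt (fun τ : ℝ => Φ (u + τ • (v - u))) ⟪g, v - u⟫ 0 :=
    hasDerivAt_comp_add_smul (by simpa using hg)
  have hslope := hline.le_slope_of_hasDerivAt (by simpa using hu) (by simpa using hv) one_pos hderiv
  simp only [slope_def_field, one_smul, zero_smul, add_zero, add_sub_cancel, sub_zero,
    div_one] at hslope
  linarith

lemma le_add_inner_gradient_add_sq (hΦ' : ∀ u, HasGradientAt Φ (Φ' u) u)
    (hlip : LipschitzWith K Φ') (u v : H) :
    Φ v ≤ Φ u + ⟪Φ' u, v - u⟫ + K / 2 * ‖v - u‖ ^ 2 := by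
  set d := v - u with hd
  have hline (τ : ℝ) : HasDerivAt (fun r : ℝ => Φ (u + r • d)) ⟪Φ' (u + τ • d), d⟫ τ :=
    hasDerivAt_comp_add_smul (hΦ' _)
  have hquad (τ : ℝ) : HasDerivAt (fun r : ℝ => Φ u + r * ⟪Φ' u, d⟫ + K / 2 * ‖d‖ ^ 2 * r ^ 2)
      (⟪Φ' u, d⟫ + K * ‖d‖ ^ 2 * τ) τ := by
    refine ((((hasDerivAt_id τ).mul_const ⟪Φ' u, d⟫).const_add (Φ u)).add
      (((hasDerivAt_id τ).pow 2).const_mul (K / 2 * ‖d‖ ^ 2))).congr_deriv ?_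
    simp only [id]
    ring
  have hderiv_le : ∀ τ ∈ Ico (0 : ℝ) 1,
      ⟪Φ' (u + τ • d), d⟫ ≤ ⟪Φ' u, d⟫ + K * ‖d‖ ^ 2 * τ := fun τ hτ => by
    have hgrad : ‖Φ' (u + τ • d) - Φ' u‖ ≤ K * (τ * ‖d‖) := by
      simpa [norm_smul, abs_of_nonneg hτ.1] using hlip.norm_sub_le (u + τ • d) u
    calc ⟪Φ' (u + τ • d), d⟫ = ⟪Φ' u, d⟫ + ⟪Φ' (u + τ • d) - Φ' u, d⟫ := by
          rw [inner_sub_left]; ring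
      _ ≤ ⟪Φ' u, d⟫ + K * (τ * ‖d‖) * ‖d‖ := by
          gcongr
          exact (real_inner_le_norm _ _).trans (by gcongr)
      _ = ⟪Φ' u, d⟫ + K * ‖d‖ ^ 2 * τ := by ring
  have hle := image_le_of_deriv_right_le_deriv_boundary
    (fun τ _ => (hline τ).continuousAt.continuousWithinAt) (fun τ _ => (hline τ).hasDerivWithinAt)
    (by simp) (fun τ _ => (hquad τ).continuousAt.continuousWithinAt)
    (fun τ _ => (hquad τ).hasDerivWithinAt) hderiv_le (right_mem_Icc.2 zero_le_one)
  simpa [hd] using hle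

lemma forwardBackward_three_point {D : Set H} {ψ : H → ℝ} {s : ℝ} {y p u : H}
    (hψ : ConvexOn ℝ D ψ) (hΦ : ConvexOn ℝ univ Φ) (hΦ' : ∀ u, HasGradientAt Φ (Φ' u) u)
    (hlip : LipschitzWith K Φ') (hs : 0 < s) (hsK : s * K ≤ 1)
    (hmin : IsMinOn (fun u => ψ u + 1 / (2 * s) * ‖u - (y - s • Φ' y)‖ ^ 2) D p)
    (hp : p ∈ D) (hu : u ∈ D) :
    2 * s * (ψ p + Φ p) + ‖p - u‖ ^ 2 ≤ 2 * s * (ψ u + Φ u) + ‖y - u‖ ^ 2 := by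
  have hweight : 1 / (2 * s) = s⁻¹ / 2 := by field_simp
  rw [hweight] at hmin
  have hgrowth := add_modulus_le_of_isMinOn (strongConvexOn_add_norm_sub_sq hψ s⁻¹ _) hmin hp hu
  have hprox : 2 * s * ψ p + ‖p - (y - s • Φ' y)‖ ^ 2 + ‖p - u‖ ^ 2
      ≤ 2 * s * ψ u + ‖u - (y - s • Φ' y)‖ ^ 2 := by
    have := mul_le_mul_of_nonneg_left hgrowth (by positivity : 0 ≤ 2 * s)
    field_simp at this
    linarith
  have hexpand (w : H) : ‖w - (y - s • Φ' y)‖ ^ 2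
      = ‖w - y‖ ^ 2 + 2 * s * ⟪Φ' y, w - y⟫ + ‖s • Φ' y‖ ^ 2 := by
    rw [← sub_add, norm_add_sq_real, real_inner_smul_right, real_inner_comm]
    ring
  rw [hexpand, hexpand, norm_sub_rev u y] at hprox
  have hupper : 2 * s * Φ p ≤ 2 * s * (Φ y + ⟪Φ' y, p - y⟫) + ‖p - y‖ ^ 2 := by
    have hdescent := mul_le_mul_of_nonneg_left (le_add_inner_gradient_add_sq hΦ' hlip y p)
      (by positivity : 0 ≤ 2 * s)
    have hstep := mul_le_mul_of_nonneg_right hsK (sq_nonneg ‖p - y‖)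
    linarith
  have hlower : 2 * s * (Φ y + ⟪Φ' y, u - y⟫) ≤ 2 * s * Φ u := by
    gcongr
    exact add_inner_gradient_le_of_convexOn hΦ (hΦ' y) (mem_univ y) (mem_univ u)
  linarith

end ConvexAnalysis

section ExtendedRealValued

/-- The effective domain of a function with values in `ℝ ∪ {+∞}`. Real-valued statements about such
a function use `EReal.toReal` on this set, where it is the coercion's inverse. -/
def effectiveDomain {X : Type*} (Ψ : X → EReal) : Set X := {u | Ψ u ≠ ⊤}

variable {X : Type*} {Ψ : X → EReal} {f : X → ℝ} {p u : X}

lemma coe_toReal_add (hbot : ∀ u, Ψ u ≠ ⊥) (hu : u ∈ effectiveDomain Ψ) (r : ℝ) :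
    (((Ψ u).toReal + r : ℝ) : EReal) = Ψ u + r := by
  rw [EReal.coe_add, EReal.coe_toReal hu (hbot u)]

lemma add_coe_le_coe_iff (hbot : ∀ u, Ψ u ≠ ⊥) {a r : ℝ} :
    Ψ u + a ≤ r ↔ u ∈ effectiveDomain Ψ ∧ (Ψ u).toReal + a ≤ r := by
  by_cases hu : Ψ u = ⊤
  · simp [effectiveDomain, hu]
  · rw [← coe_toReal_add hbot hu, EReal.coe_le_coe_iff]
    exact (and_iff_right hu).symm

lemma forall_add_coe_le_iff (hbot : ∀ u, Ψ u ≠ ⊥) (hproper : (effectiveDomain Ψ).Nonempty) :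
    (∀ u, Ψ p + f p ≤ Ψ u + f u) ↔
      p ∈ effectiveDomain Ψ ∧ IsMinOn (fun u => (Ψ u).toReal + f u) (effectiveDomain Ψ) p := by
  constructor
  · intro h
    have hreal (u) (hu : u ∈ effectiveDomain Ψ) :
        p ∈ effectiveDomain Ψ ∧ (Ψ p).toReal + f p ≤ (Ψ u).toReal + f u :=
      (add_coe_le_coe_iff hbot).1 ((h u).trans_eq (coe_toReal_add hbot hu _).symm)
    exact ⟨(hreal _ hproper.some_mem).1, fun u hu => (hreal u hu).2⟩
  · rintro ⟨hp, hmin⟩ u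
    by_cases hu : Ψ u = ⊤
    · simp [hu]
    · rw [← coe_toReal_add hbot hu]
      exact (add_coe_le_coe_iff hbot).2 ⟨hp, hmin hu⟩

lemma convexOn_toReal {E : Type*} [AddCommGroup E] [Module ℝ E] {Ψ : E → EReal}
    (hbot : ∀ u, Ψ u ≠ ⊥)
    (hconv : ∀ u v : E, ∀ a b : ℝ, 0 ≤ a → 0 ≤ b → a + b = 1 →
      Ψ (a • u + b • v) ≤ (a : EReal) * Ψ u + (b : EReal) * Ψ v) :
    ConvexOn ℝ (effectiveDomain Ψ) fun u => (Ψ u).toReal := by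
  have hcomb ⦃u⦄ (hu : u ∈ effectiveDomain Ψ) ⦃v⦄ (hv : v ∈ effectiveDomain Ψ) ⦃a b : ℝ⦄
      (ha : 0 ≤ a) (hb : 0 ≤ b) (hab : a + b = 1) : a • u + b • v ∈ effectiveDomain Ψ ∧
        (Ψ (a • u + b • v)).toReal ≤ a * (Ψ u).toReal + b * (Ψ v).toReal := by
    have h := hconv u v a b ha hb hab
    rw [← EReal.coe_toReal hu (hbot u), ← EReal.coe_toReal hv (hbot v), ← EReal.coe_mul,
      ← EReal.coe_mul, ← EReal.coe_add] at h
    simpa using (add_coe_le_coe_iff hbot (a := 0)).1 (by simpa using h)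
  exact ⟨fun u hu v hv a b ha hb hab => (hcomb hu hv ha hb hab).1,
    fun u hu v hv a b ha hb hab => (hcomb hu hv ha hb hab).2⟩

lemma isClosed_toReal_add_le [TopologicalSpace X] (hbot : ∀ u, Ψ u ≠ ⊥)
    (hΨ : LowerSemicontinuous Ψ) (hf : Continuous f) (r : ℝ) :
    IsClosed {u ∈ effectiveDomain Ψ | (Ψ u).toReal + f u ≤ r} := by
  have hlsc : LowerSemicontinuous fun u => Ψ u + (f u : EReal) :=
    hΨ.add' (continuous_coe_real_ereal.comp hf).lowerSemicontinuous fun u =>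
      EReal.continuousAt_add (.inr (EReal.coe_ne_bot _)) (.inr (EReal.coe_ne_top _))
  simpa only [Set.preimage, Set.mem_Iic, add_coe_le_coe_iff hbot] using
    hlsc.isClosed_preimage (r : EReal)

end ExtendedRealValued

/-- Admissible inertial parameters (Chambolle–Dossal): the momentum coefficient is
`(t k - 1) / t (k + 1)`, and `c = 0` is the classical condition of Nesterov and Beck–Teboulle. -/
structure IsInertialParameter (t : ℕ → ℝ) (c : ℝ) : Prop where
  one_le : ∀ k, 1 ≤ t k
  sq_sub_le : ∀ k, t (k + 1) ^ 2 - t (k + 1) ≤ t k ^ 2 - c * t k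

namespace IsInertialParameter

variable {t : ℕ → ℝ} {c : ℝ}

lemma pos (ht : IsInertialParameter t c) (k : ℕ) : 0 < t k :=
  one_pos.trans_le (ht.one_le k)

lemma shift (ht : IsInertialParameter t c) : IsInertialParameter (fun k => t (k + 1)) c :=
  ⟨fun k => ht.one_le (k + 1), fun k => ht.sq_sub_le (k + 1)⟩

lemma succ_le (ht : IsInertialParameter t c) (hc : 0 ≤ c) (k : ℕ) : t (k + 1) ≤ t k + 1 := by
  have hct : 0 ≤ c * t k := mul_nonneg hc (ht.pos k).le
  nlinarith [ht.sq_sub_le k, ht.one_le k, ht.one_le (k + 1)]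

lemma sq_succ_le (ht : IsInertialParameter t c) (hc : 0 ≤ c) (k : ℕ) :
    t (k + 1) ^ 2 ≤ t k ^ 2 + 2 * t k := by
  have hct : 0 ≤ c * t k := mul_nonneg hc (ht.pos k).le
  linarith [ht.sq_sub_le k, ht.succ_le hc k, ht.one_le k]

lemma le_mul_succ (ht : IsInertialParameter t c) (hc : 0 ≤ c) (k : ℕ) : t k ≤ t 0 * (k + 1) := by
  induction k with
  | zero => simp
  | succ k ih => push_cast; linarith [ht.succ_le hc k, ht.one_le 0]

lemma not_summable_inv (ht : IsInertialParameter t c) (hc : 0 ≤ c) :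
    ¬ Summable fun k => (t k)⁻¹ := by
  intro hsum
  have hinv : Summable fun k : ℕ => t 0 * (t k)⁻¹ := hsum.mul_left _
  refine Real.not_summable_natCast_inv ((summable_nat_add_iff 1).1 (hinv.of_nonneg_of_le
    (fun k => by positivity) fun k => ?_))
  have := ht.pos k
  rw [← div_eq_mul_inv, inv_eq_one_div, div_le_div_iff₀ (by positivity) this, one_mul]
  exact_mod_cast ht.le_mul_succ hc k

end IsInertialParameter

lemma isInertialParameter_one_add_mul {δ : ℝ} (h0 : 0 ≤ δ) (h1 : δ ≤ 1) :
    IsInertialParameter (fun k => 1 + k * δ) (1 - 2 * δ) where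
  one_le k := le_add_of_nonneg_right (by positivity)
  sq_sub_le k := by
    push_cast
    nlinarith [mul_nonneg h0 (sub_nonneg.2 h1)]

lemma isInertialParameter_nesterov {α : ℝ} (hα : 2 ≤ α) :
    IsInertialParameter (fun k => 1 + k * (α - 1)⁻¹) ((α - 3) / (α - 1)) := by
  have hpos : 0 < α - 1 := by linarith
  convert isInertialParameter_one_add_mul (inv_nonneg.2 hpos.le)
    (inv_le_one_of_one_le₀ (by linarith)) using 1
  field_simp
  ring

section InertialDescent

variable {H : Type*} [NormedAddCommGroup H] [InnerProductSpace ℝ H]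

/-- The inertial extrapolation of `x k` and `x (k + 1)`, from which `x (k + 2)` is computed; it is
the paper's `y (k + 1)`, for `t k = 1 + k / (α - 1)`. -/
noncomputable def extrapolation (x : ℕ → H) (t : ℕ → ℝ) (k : ℕ) : H :=
  x (k + 1) + ((t k - 1) / t (k + 1)) • (x (k + 1) - x k)

/-- The overshooting point `x k + t k • (x (k + 1) - x k)`, whose distance to a minimizer enters
the Lyapunov function of the accelerated method. -/
def leadingPoint (x : ℕ → H) (t : ℕ → ℝ) (k : ℕ) : H :=
  t k • x (k + 1) + (1 - t k) • x k

/-- The Lyapunov function of the accelerated method relative to a minimizer `z` of `F`. -/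
def lyapunov (F : H → ℝ) (x : ℕ → H) (t : ℕ → ℝ) (z : H) (k : ℕ) : ℝ :=
  ‖leadingPoint x t k - z‖ ^ 2 + t k ^ 2 * (F (x (k + 1)) - F z)

/-- Kinetic plus potential energy of the iterates; the potential is the gap to the value at `z`. -/
def inertialEnergy (F : H → ℝ) (x : ℕ → H) (z : H) (k : ℕ) : ℝ :=
  ‖x (k + 1) - x k‖ ^ 2 + (F (x (k + 1)) - F z)

/-- Sequences obeying the three-point inequality of the accelerated forward-backward method, for
`F = 2sΘ` on the domain `D`. Membership in `D` starts at `x 1` since `x 0` is only extrapolated. -/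
structure IsInertialDescent (F : H → ℝ) (D : Set H) (t : ℕ → ℝ) (x : ℕ → H) : Prop where
  mem : ∀ k, x (k + 1) ∈ D
  three_point : ∀ k, ∀ u ∈ D,
    F (x (k + 2)) + ‖x (k + 2) - u‖ ^ 2 ≤ F u + ‖extrapolation x t k - u‖ ^ 2

variable {F : H → ℝ} {D : Set H} {t : ℕ → ℝ} {x : ℕ → H} {c : ℝ} {z : H}

lemma extrapolation_nesterov {α : ℝ} (hα : 1 < α) (x : ℕ → H) (k : ℕ) :
    extrapolation x (fun k => 1 + k * (α - 1)⁻¹) k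
      = x (k + 1) + (((k + 1 : ℕ) - 1 : ℝ) / ((k + 1 : ℕ) + α - 1)) • (x (k + 1) - x k) := by
  have hpos : 0 < α - 1 := by linarith
  rw [extrapolation]
  congr 2
  push_cast
  have : 0 < (k : ℝ) + 1 + α - 1 := by linarith [k.cast_nonneg (α := ℝ)]
  field_simp
  ring

lemma smul_extrapolation_sub {k : ℕ} (ht : t (k + 1) ≠ 0) :
    t (k + 1) • (extrapolation x t k - x (k + 1)) = (t k - 1) • (x (k + 1) - x k) := by
  rw [extrapolation, add_sub_cancel_left, smul_smul, mul_div_cancel₀ _ ht]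

lemma leadingPoint_eq_extrapolation {k : ℕ} (ht : t (k + 1) ≠ 0) :
    leadingPoint x t k
      = t (k + 1) • extrapolation x t k + (1 - t (k + 1)) • x (k + 1) := by
  have h : t (k + 1) • extrapolation x t k
      = (t k - 1) • (x (k + 1) - x k) + t (k + 1) • x (k + 1) := by
    rw [← smul_extrapolation_sub ht, ← smul_add, sub_add_cancel]
  rw [h, leadingPoint]
  module

lemma leadingPoint_sub (k : ℕ) :
    leadingPoint x t k - x (k + 1) = (t k - 1) • (x (k + 1) - x k) := by
  rw [leadingPoint]
  module

namespace IsInertialDescent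

lemma gap_nonneg (h : IsInertialDescent F D t x) (hmin : IsMinOn F D z) (k : ℕ) :
    0 ≤ F (x (k + 1)) - F z :=
  sub_nonneg.2 (hmin (h.mem k))

lemma lyapunov_nonneg (h : IsInertialDescent F D t x) (hmin : IsMinOn F D z) (k : ℕ) :
    0 ≤ lyapunov F x t z k := by
  have := h.gap_nonneg hmin k
  unfold lyapunov
  positivity

lemma inertialEnergy_nonneg (h : IsInertialDescent F D t x) (hmin : IsMinOn F D z) (k : ℕ) :
    0 ≤ inertialEnergy F x z k :=
  add_nonneg (sq_nonneg _) (h.gap_nonneg hmin k)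

lemma lyapunov_succ_le (h : IsInertialDescent F D t x) {k : ℕ} (ht : 1 ≤ t (k + 1)) (hz : z ∈ D) :
    lyapunov F x t z (k + 1) ≤ ‖leadingPoint x t k - z‖ ^ 2
      + (t (k + 1) ^ 2 - t (k + 1)) * (F (x (k + 1)) - F z) := by
  have hminimizer := mul_le_mul_of_nonneg_left (h.three_point k z hz) (zero_le_one.trans ht)
  have hprevious := mul_le_mul_of_nonneg_left (h.three_point k _ (h.mem k))
    (by nlinarith : 0 ≤ t (k + 1) * (t (k + 1) - 1))
  rw [lyapunov, leadingPoint_eq_extrapolation (k := k) (by linarith), leadingPoint,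
    norm_sq_smul_add_smul_sub (add_sub_cancel _ _), norm_sq_smul_add_smul_sub (add_sub_cancel _ _)]
  linarith

lemma lyapunov_succ_add_le (h : IsInertialDescent F D t x) (ht : IsInertialParameter t c)
    (hz : z ∈ D) (hmin : IsMinOn F D z) (k : ℕ) :
    lyapunov F x t z (k + 1) + c * (t k * (F (x (k + 1)) - F z)) ≤ lyapunov F x t z k := by
  have hstep := h.lyapunov_succ_le (ht.one_le (k + 1)) hz
  have hparam := mul_le_mul_of_nonneg_right (ht.sq_sub_le k) (h.gap_nonneg hmin k)
  rw [lyapunov.eq_def F x t z k]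
  linarith

lemma summable_mul_gap (h : IsInertialDescent F D t x) (ht : IsInertialParameter t c) (hc : 0 < c)
    (hz : z ∈ D) (hmin : IsMinOn F D z) :
    Summable fun k => t k * (F (x (k + 1)) - F z) := by
  refine (summable_mul_left_iff hc.ne').1 (summable_of_succ_add_le_add
    (h.lyapunov_nonneg hmin) (fun k => ?_) summable_zero fun k => ?_)
  · exact mul_nonneg hc.le (mul_nonneg (ht.pos k).le (h.gap_nonneg hmin k))
  · simpa using h.lyapunov_succ_add_le ht hz hmin k

lemma exists_tendsto_lyapunov (h : IsInertialDescent F D t x) (ht : IsInertialParameter t c)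
    (hc : 0 ≤ c) (hz : z ∈ D) (hmin : IsMinOn F D z) :
    ∃ l, Tendsto (lyapunov F x t z) atTop (𝓝 l) := by
  refine exists_tendsto_of_succ_le_add (h.lyapunov_nonneg hmin) summable_zero fun k => ?_
  have := mul_nonneg hc (mul_nonneg (ht.pos k).le (h.gap_nonneg hmin k))
  linarith [h.lyapunov_succ_add_le ht hz hmin k]

lemma inertialEnergy_succ_add_le (h : IsInertialDescent F D t x) (ht : IsInertialParameter t c)
    (hc : 0 ≤ c) (hmin : IsMinOn F D z) (k : ℕ) :
    t (k + 1) ^ 2 * inertialEnergy F x z (k + 1) + t k * ‖x (k + 1) - x k‖ ^ 2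
      ≤ t k ^ 2 * inertialEnergy F x z k + 2 * (t k * (F (x (k + 1)) - F z)) := by
  have hprevious := mul_le_mul_of_nonneg_left (h.three_point k _ (h.mem k))
    (sq_nonneg (t (k + 1)))
  have hmomentum : t (k + 1) ^ 2 * ‖extrapolation x t k - x (k + 1)‖ ^ 2
      = (t k - 1) ^ 2 * ‖x (k + 1) - x k‖ ^ 2 := by
    have hnorm := congrArg norm (smul_extrapolation_sub (x := x) (ht.pos (k + 1)).ne')
    rw [norm_smul, norm_smul, Real.norm_eq_abs, Real.norm_eq_abs] at hnorm
    rw [← sq_abs (t (k + 1)), ← mul_pow, hnorm, mul_pow, sq_abs]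
  have hkinetic : (t k - 1) ^ 2 * ‖x (k + 1) - x k‖ ^ 2
      ≤ (t k ^ 2 - t k) * ‖x (k + 1) - x k‖ ^ 2 := by
    gcongr
    linarith [ht.one_le k]
  have hpotential := mul_le_mul_of_nonneg_right (ht.sq_succ_le hc k) (h.gap_nonneg hmin k)
  simp only [inertialEnergy]
  linarith

theorem tendsto_sq_mul_inertialEnergy (h : IsInertialDescent F D t x)
    (ht : IsInertialParameter t c) (hc : 0 < c) (hz : z ∈ D) (hmin : IsMinOn F D z) :
    Tendsto (fun k => t k ^ 2 * inertialEnergy F x z k) atTop (𝓝 0) := by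
  have hnonneg (k : ℕ) : 0 ≤ t k ^ 2 * inertialEnergy F x z k :=
    mul_nonneg (sq_nonneg _) (h.inertialEnergy_nonneg hmin k)
  have hvelocity_nonneg (k : ℕ) : 0 ≤ t k * ‖x (k + 1) - x k‖ ^ 2 :=
    mul_nonneg (ht.pos k).le (sq_nonneg _)
  have hgap := h.summable_mul_gap ht hc hz hmin
  have hstep := h.inertialEnergy_succ_add_le ht hc.le hmin
  have hvelocity : Summable fun k => t k * ‖x (k + 1) - x k‖ ^ 2 :=
    summable_of_succ_add_le_add hnonneg hvelocity_nonneg (hgap.mul_left 2) hstep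
  obtain ⟨l, hl⟩ := exists_tendsto_of_succ_le_add hnonneg (hgap.mul_left 2)
    fun k => (le_add_of_nonneg_right (hvelocity_nonneg k)).trans (hstep k)
  have hsum : Summable fun k => (t k)⁻¹ * (t k ^ 2 * inertialEnergy F x z k) := by
    refine (hvelocity.add hgap).congr fun k => ?_
    have := (ht.pos k).ne'
    rw [inertialEnergy]
    field_simp
  rwa [eq_zero_of_tendsto_of_summable_mul (ht.not_summable_inv hc.le) hl hsum] at hl

lemma tendsto_sq_mul_gap (h : IsInertialDescent F D t x) (ht : IsInertialParameter t c)
    (hc : 0 < c) (hz : z ∈ D) (hmin : IsMinOn F D z) :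
    Tendsto (fun k => t k ^ 2 * (F (x (k + 1)) - F z)) atTop (𝓝 0) :=
  squeeze_zero (fun k => mul_nonneg (sq_nonneg _) (h.gap_nonneg hmin k))
    (fun _ => mul_le_mul_of_nonneg_left (le_add_of_nonneg_left (sq_nonneg _)) (sq_nonneg _))
    (h.tendsto_sq_mul_inertialEnergy ht hc hz hmin)

lemma tendsto_mul_norm_sub (h : IsInertialDescent F D t x) (ht : IsInertialParameter t c)
    (hc : 0 < c) (hz : z ∈ D) (hmin : IsMinOn F D z) :
    Tendsto (fun k => t k * ‖x (k + 1) - x k‖) atTop (𝓝 0) := by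
  have hsq : Tendsto (fun k => (t k * ‖x (k + 1) - x k‖) ^ 2) atTop (𝓝 0) := by
    refine squeeze_zero (fun k => sq_nonneg _) (fun k => ?_)
      (h.tendsto_sq_mul_inertialEnergy ht hc hz hmin)
    rw [mul_pow]
    exact mul_le_mul_of_nonneg_left (le_add_of_nonneg_right (h.gap_nonneg hmin k)) (sq_nonneg _)
  simpa [Real.sqrt_sq, mul_nonneg, (ht.pos _).le] using hsq.sqrt

theorem tendsto_value (h : IsInertialDescent F D t x) (ht : IsInertialParameter t c)
    (hc : 0 < c) (hz : z ∈ D) (hmin : IsMinOn F D z) :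
    Tendsto (fun k => F (x k)) atTop (𝓝 (F z)) := by
  have hgap : Tendsto (fun k => F (x (k + 1)) - F z) atTop (𝓝 0) :=
    squeeze_zero (h.gap_nonneg hmin)
      (fun k => le_mul_of_one_le_left (h.gap_nonneg hmin k) (one_le_pow₀ (ht.one_le k)))
      (h.tendsto_sq_mul_gap ht hc hz hmin)
  rw [← tendsto_add_atTop_iff_nat 1]
  exact tendsto_sub_nhds_zero_iff.1 hgap

lemma tendsto_leadingPoint_sub (h : IsInertialDescent F D t x) (ht : IsInertialParameter t c)
    (hc : 0 < c) (hz : z ∈ D) (hmin : IsMinOn F D z) :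
    Tendsto (fun k => leadingPoint x t k - x (k + 1)) atTop (𝓝 0) := by
  refine squeeze_zero_norm (fun k => ?_) (h.tendsto_mul_norm_sub ht hc hz hmin)
  rw [leadingPoint_sub, norm_smul, Real.norm_of_nonneg (sub_nonneg.2 (ht.one_le k))]
  gcongr
  exact sub_le_self _ zero_le_one

theorem exists_tendsto_norm_sub (h : IsInertialDescent F D t x) (ht : IsInertialParameter t c)
    (hc : 0 < c) (hz : z ∈ D) (hmin : IsMinOn F D z) :
    ∃ l, Tendsto (fun k => ‖x k - z‖) atTop (𝓝 l) := by
  obtain ⟨l, hl⟩ := h.exists_tendsto_lyapunov ht hc.le hz hmin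
  have hsq : Tendsto (fun k => ‖leadingPoint x t k - z‖ ^ 2) atTop (𝓝 l) := by
    simpa [lyapunov] using hl.sub (h.tendsto_sq_mul_gap ht hc hz hmin)
  have hleading : Tendsto (fun k => ‖leadingPoint x t k - z‖) atTop (𝓝 (√l)) := by
    simpa using hsq.sqrt
  refine ⟨√l, (tendsto_add_atTop_iff_nat 1).1 ?_⟩
  have hdiff : Tendsto (fun k => ‖x (k + 1) - z‖ - ‖leadingPoint x t k - z‖) atTop (𝓝 0) := by
    refine squeeze_zero_norm (fun k => ?_)
      (tendsto_zero_iff_norm_tendsto_zero.1 (h.tendsto_leadingPoint_sub ht hc hz hmin))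
    rw [norm_sub_rev (leadingPoint x t k) (x (k + 1)),
      ← sub_sub_sub_cancel_right (x (k + 1)) (leadingPoint x t k) z]
    exact abs_norm_sub_norm_le _ _
  simpa using hdiff.add hleading

theorem exists_weakTendsto [CompleteSpace H] (h : IsInertialDescent F D t x)
    (ht : IsInertialParameter t c) (hc : 0 < c) (hconv : QuasiconvexOn ℝ D F)
    (hclosed : ∀ r, IsClosed {u ∈ D | F u ≤ r}) (hz : z ∈ D) (hmin : IsMinOn F D z) :
    ∃ p ∈ D, IsMinOn F D p ∧ WeakTendsto x atTop p := by
  have hmem : ∀ᶠ k in atTop, x k ∈ D := by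
    filter_upwards [eventually_ge_atTop 1] with k hk
    simpa [Nat.sub_add_cancel hk] using h.mem (k - 1)
  have hvalue := h.tendsto_value ht hc hz hmin
  obtain ⟨p, ⟨hpD, hp⟩, hweak⟩ := opial (S := {p | p ∈ D ∧ IsMinOn F D p}) ⟨z, hz, hmin⟩
    (fun q hq => h.exists_tendsto_norm_sub ht hc hq.1 hq.2) fun U p hU hp => by
      obtain ⟨hpD, hle⟩ :=
        hp.mem_and_le_of_quasiconvexOn hconv hclosed (hU hmem) (hvalue.mono_left hU)
      exact ⟨hpD, fun u hu => hle.trans (hmin hu)⟩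
  exact ⟨p, hpD, hp, hweak⟩

end IsInertialDescent

end InertialDescent

section Fista

variable {H : Type*} [NormedAddCommGroup H]

/-- `p = prox_{sΨ}(w)`, encoded as `p` minimizing `u ↦ Ψ u + ‖u - w‖ ^ 2 / (2 * s)`. -/
def IsProx (Ψ : H → EReal) (s : ℝ) (w p : H) : Prop :=
  ∀ u, Ψ p + ((1 / (2 * s) * ‖p - w‖ ^ 2 : ℝ) : EReal)
    ≤ Ψ u + ((1 / (2 * s) * ‖u - w‖ ^ 2 : ℝ) : EReal)

lemma isProx_iff {Ψ : H → EReal} {s : ℝ} {w p : H} (hbot : ∀ u, Ψ u ≠ ⊥)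
    (hproper : (effectiveDomain Ψ).Nonempty) :
    IsProx Ψ s w p ↔ p ∈ effectiveDomain Ψ ∧
      IsMinOn (fun u => (Ψ u).toReal + 1 / (2 * s) * ‖u - w‖ ^ 2) (effectiveDomain Ψ) p :=
  forall_add_coe_le_iff (f := fun u => 1 / (2 * s) * ‖u - w‖ ^ 2) hbot hproper

lemma mul_toNNReal_le_one {s L : ℝ} (hs : 0 < s) (hsL : s ≤ 1 / L) : s * L.toNNReal ≤ 1 := by
  have hL : 0 < L := one_div_pos.1 (hs.trans_le hsL)
  rwa [Real.coe_toNNReal L hL.le, ← le_div_iff₀ hL]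

variable [InnerProductSpace ℝ H] [CompleteSpace H]

theorem fista_weak_convergence_general {Ψ : H → EReal} {Φ : H → ℝ} {Φ' : H → H} {K : ℝ≥0}
    {s c : ℝ} {t : ℕ → ℝ} {x : ℕ → H} {z : H}
    (hΨ_ne_bot : ∀ u, Ψ u ≠ ⊥) (hΨ_proper : ∃ u, Ψ u ≠ ⊤) (hΨ_lsc : LowerSemicontinuous Ψ)
    (hΨ_convex : ∀ u v : H, ∀ a b : ℝ, 0 ≤ a → 0 ≤ b → a + b = 1 →
      Ψ (a • u + b • v) ≤ (a : EReal) * Ψ u + (b : EReal) * Ψ v)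
    (hΦ_convex : ConvexOn ℝ univ Φ) (hΦ_diff : ∀ u, HasGradientAt Φ (Φ' u) u)
    (hΦ_lip : LipschitzWith K Φ') (hs : 0 < s) (hsK : s * K ≤ 1)
    (ht : IsInertialParameter t c) (hc : 0 < c)
    (hx : ∀ k, IsProx Ψ s (extrapolation x t k - s • Φ' (extrapolation x t k)) (x (k + 2)))
    (hz : ∀ u, Ψ z + (Φ z : EReal) ≤ Ψ u + (Φ u : EReal)) :
    ∃ p : H, (∀ u, Ψ p + (Φ p : EReal) ≤ Ψ u + (Φ u : EReal)) ∧ WeakTendsto x atTop p := by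
  set D := effectiveDomain Ψ
  set Θ : H → ℝ := fun u => (Ψ u).toReal + Φ u
  have hψ : ConvexOn ℝ D fun u => (Ψ u).toReal := convexOn_toReal hΨ_ne_bot hΨ_convex
  have hargmin (p : H) : (∀ u, Ψ p + (Φ p : EReal) ≤ Ψ u + (Φ u : EReal)) ↔
      p ∈ D ∧ IsMinOn (fun u => 2 * s * Θ u) D p := by
    simp only [forall_add_coe_le_iff hΨ_ne_bot hΨ_proper, isMinOn_iff,
      mul_le_mul_iff_of_pos_left (by positivity : 0 < 2 * s), D, Θ]
  have hprox (k : ℕ) := (isProx_iff hΨ_ne_bot hΨ_proper).1 (hx k)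
  -- `x 1` need not lie in the effective domain, so the descent property starts one index later.
  have hdescent : IsInertialDescent (fun u => 2 * s * Θ u) D (fun k => t (k + 1))
      fun k => x (k + 1) :=
    ⟨fun k => (hprox k).1, fun k u hu => forwardBackward_three_point hψ hΦ_convex hΦ_diff hΦ_lip
      hs hsK (hprox (k + 1)).2 (hprox (k + 1)).1 hu⟩
  have hconv : QuasiconvexOn ℝ D fun u => 2 * s * Θ u :=
    ((hψ.add (hΦ_convex.subset (subset_univ _) hψ.1)).smul (by positivity)).quasiconvexOn
  have hclosed (r : ℝ) : IsClosed {u ∈ D | 2 * s * Θ u ≤ r} := by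
    simpa only [le_div_iff₀' (by positivity : 0 < 2 * s)] using isClosed_toReal_add_le hΨ_ne_bot
      hΨ_lsc (continuous_iff_continuousAt.2 fun u => (hΦ_diff u).continuousAt) (r / (2 * s))
  obtain ⟨p, hpD, hp, hweak⟩ := hdescent.exists_weakTendsto ht.shift hc hconv hclosed
    ((hargmin z).1 hz).1 ((hargmin z).1 hz).2
  exact ⟨p, (hargmin p).2 ⟨hpD, hp⟩, fun v => (tendsto_add_atTop_iff_nat 1).1 (hweak v)⟩

end Fista

/-- Theorem 2: the sequence `(x_k)` converges weakly to a minimizer of `Ψ + Φ`. -/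
theorem fista_weak_convergence
    {H : Type*} [NormedAddCommGroup H] [InnerProductSpace ℝ H] [CompleteSpace H]
    (Ψ : H → EReal) (Φ : H → ℝ) (Φ' : H → H) (L s α : ℝ)
    (hΨ_ne_bot : ∀ u, Ψ u ≠ ⊥) (hΨ_proper : ∃ u, Ψ u ≠ ⊤)
    (hΨ_lsc : LowerSemicontinuous Ψ)
    (hΨ_convex : ∀ u v : H, ∀ a b : ℝ, 0 ≤ a → 0 ≤ b → a + b = 1 →
      Ψ (a • u + b • v) ≤ (a : EReal) * Ψ u + (b : EReal) * Ψ v)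
    (hΦ_convex : ConvexOn ℝ Set.univ Φ)
    (hΦ_diff : ∀ u, HasGradientAt Φ (Φ' u) u)
    (hΦ_lip : LipschitzWith (Real.toNNReal L) Φ')
    (hα : 3 < α) (hs : 0 < s) (hsL : s < 1 / L)
    (x y : ℕ → H)
    (hy : ∀ k : ℕ, 1 ≤ k →
      y k = x k + (((k : ℝ) - 1) / ((k : ℝ) + α - 1)) • (x k - x (k - 1)))
    (hx : ∀ k : ℕ, 1 ≤ k → ∀ u : H,
      Ψ (x (k + 1)) + ((1 / (2 * s) * ‖x (k + 1) - (y k - s • Φ' (y k))‖ ^ 2 : ℝ) : EReal)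
        ≤ Ψ u + ((1 / (2 * s) * ‖u - (y k - s • Φ' (y k))‖ ^ 2 : ℝ) : EReal))
    (xstar : H)
    (hxstar : ∀ u, Ψ xstar + (Φ xstar : EReal) ≤ Ψ u + (Φ u : EReal)) :
    ∃ p : H, (∀ u, Ψ p + (Φ p : EReal) ≤ Ψ u + (Φ u : EReal)) ∧
      ∀ v : H, Tendsto (fun k : ℕ => ⟪x k, v⟫) atTop (nhds ⟪p, v⟫) := by
  have hextrapolation (k : ℕ) : extrapolation x (fun k => 1 + k * (α - 1)⁻¹) k = y (k + 1) :=
    (extrapolation_nesterov (by linarith) x k).trans (hy (k + 1) k.succ_pos).symm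
  exact fista_weak_convergence_general hΨ_ne_bot hΨ_proper hΨ_lsc hΨ_convex hΦ_convex hΦ_diff hΦ_lip
    hs (mul_toNNReal_le_one hs hsL.le) (isInertialParameter_nesterov (α := α) (by linarith))
    (div_pos (by linarith) (by linarith))
    (fun k => by rw [hextrapolation]; exact hx (k + 1) k.succ_pos) hxstar
end

section
/- Let H be a real Hilbert space, Ψ : H → ℝ ∪ {+∞} proper, lower-semicontinuous and convex, and Φ : H → ℝ convex and continuously differentiable with L-Lipschitz continuous gradient. Suppose x* ∈ argmin(Ψ + Φ), and let (x_k) be generated by the accelerated forward-backward algorithm with parameter α > 3 and step size 0 < s < 1/L. Define δ_k = (k−1)(‖x_k − x*‖² − ‖x_{k−1} − x*‖²) + (α−1)‖x_k − x*‖². Then for every k ≥ 1, δ_{k+1} − δ_k ≤ 2(k+α−1)‖x_k − x_{k−1}‖², and the limit lim_{k→∞} δ_k exists. -/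
open Filter RealInnerProductSpace

/-!
Multiply the gap `Θ(x_k) - Θ(x*)` by `2s` and call it `w_k`. The forward-backward inequality
`2s (Θ(p) - Θ(z)) ≤ ‖y - z‖² - ‖p - z‖²`, taken at `z = x*` and at `z = x_k`, is all that is needed
about `Ψ` and `Φ`. Put `t = k + α - 1` and `B_k = ‖x_k - x_{k-1}‖²`. The two inequalities give

* `E_{k+1} + (α - 3) t w_k ≤ E_k` for
  `E_k = (t - 1)² w_k + ‖(α - 1)(x_k - x*) + (k - 1)(x_k - x_{k-1})‖²`, so `∑ t w_k < ∞`;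
* `W_{k+1} + 2 t B_k ≤ W_k + 2 t w_k` for `W_k = (t - 1)² (w_k + B_k)`, so `∑ t B_k < ∞` and `W` is
  bounded;
* `δ_{k+1} ≤ δ_k + 2 t B_k` and `(α - 1) δ_k ≥ -W_k`, so `δ` converges.
-/

section Summation

variable {a b c : ℕ → ℝ} {m : ℝ}

theorem exists_tendsto_and_summable_of_add_le (hm : ∀ n, m ≤ a n) (hb : ∀ n, 0 ≤ b n)
    (hc : Summable c) (h : ∀ n, a (n + 1) + b n ≤ a n + c n) :
    (∃ l, Tendsto a atTop (nhds l)) ∧ Summable b := by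
  have hC := hc.hasSum.tendsto_sum_nat
  obtain ⟨M, hM⟩ := hC.bddAbove_range
  set f : ℕ → ℝ := fun n => a n - ∑ i ∈ Finset.range n, c i with hf
  have hstep (n : ℕ) : f (n + 1) + b n ≤ f n := by
    simp only [hf, Finset.sum_range_succ]
    linarith [h n]
  have hlower (n : ℕ) : m - M ≤ f n := sub_le_sub (hm n) (hM (Set.mem_range_self n))
  have hanti : Antitone f := antitone_nat_of_succ_le fun n => by linarith [hstep n, hb n]
  have hlim := tendsto_atTop_ciInf hanti ⟨m - M, Set.forall_mem_range.2 hlower⟩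
  have hsum (n : ℕ) : ∑ i ∈ Finset.range n, b i ≤ f 0 - f n := by
    rw [← Finset.sum_range_sub']
    exact Finset.sum_le_sum fun i _ => by linarith [hstep i]
  exact ⟨⟨_, (hlim.add hC).congr fun n => sub_add_cancel _ _⟩,
    summable_of_sum_range_le hb fun n => (hsum n).trans (sub_le_sub_left (hlower n) _)⟩

theorem exists_tendsto_and_summable_of_eventually_add_le (hm : ∀ᶠ n in atTop, m ≤ a n)
    (hb : ∀ᶠ n in atTop, 0 ≤ b n) (hc : Summable c)
    (h : ∀ᶠ n in atTop, a (n + 1) + b n ≤ a n + c n) :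
    (∃ l, Tendsto a atTop (nhds l)) ∧ Summable b := by
  obtain ⟨N, hN⟩ := eventually_atTop.1 (hm.and (hb.and h))
  obtain ⟨⟨l, hl⟩, hsum⟩ := exists_tendsto_and_summable_of_add_le
    (a := fun n => a (n + N)) (b := fun n => b (n + N)) (c := fun n => c (n + N))
    (fun n => (hN _ (Nat.le_add_left N n)).1)
    (fun n => (hN _ (Nat.le_add_left N n)).2.1)
    ((summable_nat_add_iff N).2 hc)
    (fun n => by simpa only [Nat.add_right_comm] using (hN _ (Nat.le_add_left N n)).2.2)
  exact ⟨⟨l, (tendsto_add_atTop_iff_nat N).1 hl⟩, (summable_nat_add_iff N).1 hsum⟩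

end Summation

section SmoothFunctions

variable {E : Type*} [NormedAddCommGroup E] [NormedSpace ℝ E] {f : E → ℝ}

theorem hasDerivAt_comp_lineMap {f' : E →L[ℝ] ℝ} {u v : E} {t : ℝ}
    (hf : HasFDerivAt f f' (AffineMap.lineMap u v t)) :
    HasDerivAt (fun r : ℝ => f (AffineMap.lineMap u v r)) (f' (v - u)) t :=
  hf.comp_hasDerivAt t (AffineMap.hasDerivAt_lineMap (a := u) (b := v))

theorem add_fderiv_le_of_convexOn {S : Set E} {f' : E →L[ℝ] ℝ} {u v : E}
    (hf : ConvexOn ℝ S f) (hu : u ∈ S) (hv : v ∈ S) (hf' : HasFDerivAt f f' u) :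
    f u + f' (v - u) ≤ f v := by
  have hline := hf.comp_affineMap (AffineMap.lineMap u v : ℝ →ᵃ[ℝ] E)
  have hderiv : HasDerivAt (f ∘ (AffineMap.lineMap u v : ℝ →ᵃ[ℝ] E)) (f' (v - u)) 0 :=
    hasDerivAt_comp_lineMap (by simpa only [AffineMap.lineMap_apply_zero] using hf')
  have hslope := hline.le_slope_of_hasDerivAt (by simpa using hu) (by simpa using hv)
    one_pos hderiv
  simp only [slope_def_field, Function.comp_apply, AffineMap.lineMap_apply_one,
    AffineMap.lineMap_apply_zero, sub_zero, div_one] at hslope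
  linarith

theorem le_add_fderiv_add_sq_of_lipschitzWith {f' : E → E →L[ℝ] ℝ} {K : NNReal}
    (hf : ∀ u, HasFDerivAt f (f' u) u) (hf' : LipschitzWith K f') (u v : E) :
    f v ≤ f u + f' u (v - u) + K / 2 * ‖v - u‖ ^ 2 := by
  set γ : ℝ →ᵃ[ℝ] E := AffineMap.lineMap u v with hγ
  set B : ℝ → ℝ := fun t => f u + t * f' u (v - u) + K / 2 * ‖v - u‖ ^ 2 * t ^ 2 with hB
  have hderiv (t : ℝ) : HasDerivAt (fun r => f (γ r)) (f' (γ t) (v - u)) t :=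
    hasDerivAt_comp_lineMap (hf _)
  have hBderiv (t : ℝ) : HasDerivAt B (f' u (v - u) + K * ‖v - u‖ ^ 2 * t) t := by
    refine ((((hasDerivAt_id t).mul_const _).const_add (f u)).add
      ((hasDerivAt_pow 2 t).const_mul _)).congr_deriv ?_
    push_cast
    ring
  have hbound (t : ℝ) (ht : t ∈ Set.Ico (0 : ℝ) 1) :
      f' (γ t) (v - u) ≤ f' u (v - u) + K * ‖v - u‖ ^ 2 * t := by
    have hγt : ‖γ t - u‖ = t * ‖v - u‖ := by
      rw [hγ, AffineMap.lineMap_apply_module', add_sub_cancel_right, norm_smul,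
        Real.norm_of_nonneg ht.1]
    calc f' (γ t) (v - u) = f' u (v - u) + (f' (γ t) - f' u) (v - u) := by simp
      _ ≤ f' u (v - u) + K * ‖γ t - u‖ * ‖v - u‖ := by
        gcongr
        exact (le_abs_self _).trans <| (f' (γ t) - f' u).le_of_opNorm_le
          (hf'.norm_sub_le _ _) _
      _ = f' u (v - u) + K * ‖v - u‖ ^ 2 * t := by rw [hγt]; ring
  have h := image_le_of_deriv_right_le_deriv_boundary
    (fun t _ => (hderiv t).continuousAt.continuousWithinAt)
    (fun t _ => (hderiv t).hasDerivWithinAt) (by simp [hγ, hB])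
    (fun t _ => (hBderiv t).continuousAt.continuousWithinAt)
    (fun t _ => (hBderiv t).hasDerivWithinAt) hbound (Set.right_mem_Icc.2 zero_le_one)
  simpa [hγ, hB] using h

end SmoothFunctions

section ExtendedReals

variable {a b : EReal} {r q : ℝ}

theorem ereal_ne_top_of_add_coe_le (hb : b ≠ ⊤) (h : a + r ≤ b + q) : a ≠ ⊤ := by
  rintro rfl
  rw [EReal.top_add_coe, top_le_iff] at h
  exact EReal.add_ne_top hb (EReal.coe_ne_top q) h

theorem ereal_toReal_add_le (ha : a ≠ ⊥) (hb : b ≠ ⊤) (h : a + r ≤ b + q) :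
    a.toReal + r ≤ b.toReal + q := by
  have ha' := ereal_ne_top_of_add_coe_le hb h
  lift a to ℝ using ⟨ha', ha⟩
  have hb' : b ≠ ⊥ := by
    rintro rfl
    exact absurd h (by rw [EReal.bot_add, le_bot_iff]; exact EReal.coe_ne_bot (a + r))
  lift b to ℝ using ⟨hb, hb'⟩
  exact_mod_cast h

theorem ereal_add_coe_le_of_sub_le_sub {r' q' : ℝ} (h : a + r ≤ b + q) (h' : r' - r ≤ q' - q) :
    a + r' ≤ b + q' := by
  calc a + r' = a + r + ((r' - r : ℝ) : EReal) := by
        rw [add_assoc, ← EReal.coe_add, add_sub_cancel]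
    _ ≤ b + q + ((q' - q : ℝ) : EReal) := add_le_add h (EReal.coe_le_coe_iff.2 h')
    _ = b + q' := by rw [add_assoc, ← EReal.coe_add, add_sub_cancel]

end ExtendedReals

section InnerProductSpaces

variable {H : Type*} [NormedAddCommGroup H] [InnerProductSpace ℝ H]

theorem norm_smul_add_smul_sq (a b : ℝ) (u v : H) :
    ‖a • u + b • v‖ ^ 2 =
      (a + b) * (a * ‖u‖ ^ 2 + b * ‖v‖ ^ 2) - a * b * ‖u - v‖ ^ 2 := by
  rw [norm_add_sq_real, norm_sub_sq_real, norm_smul, norm_smul, real_inner_smul_left,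
    real_inner_smul_right, mul_pow, mul_pow, Real.norm_eq_abs, Real.norm_eq_abs, sq_abs, sq_abs]
  ring

section ForwardBackward

/-- Convexity of an extended-real-valued function. `ConvexOn` does not apply, since `EReal` carries
no scalar multiplication by `ℝ`. -/
def ERealConvex {E : Type*} [AddCommMonoid E] [Module ℝ E] (Ψ : E → EReal) : Prop :=
  ∀ u v : E, ∀ a b : ℝ, 0 ≤ a → 0 ≤ b → a + b = 1 →
    Ψ (a • u + b • v) ≤ (a : EReal) * Ψ u + (b : EReal) * Ψ v

/-- For `0 < s`, the point `p` is a value of the proximal map `prox_{sΨ}` at `v`, that is, a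
minimizer of `u ↦ Ψ u + ‖u - v‖² / (2s)`. -/
def IsProxPoint {E : Type*} [NormedAddCommGroup E] (Ψ : E → EReal) (s : ℝ) (v p : E) : Prop :=
  ∀ u, Ψ p + ((1 / (2 * s) * ‖p - v‖ ^ 2 : ℝ) : EReal) ≤
    Ψ u + ((1 / (2 * s) * ‖u - v‖ ^ 2 : ℝ) : EReal)

variable {Ψ : H → EReal} {s : ℝ} {p : H}

-- Compare `p` with `(1 - t) p + t z`, divide by `t` and let `t → 0`.
theorem IsProxPoint.add_le_of_eq_coe {v z : H} {P Z : ℝ} (hp : IsProxPoint Ψ s v p)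
    (hΨ : ERealConvex Ψ) (hP : Ψ p = P) (hZ : Ψ z = Z) :
    P + 1 / (2 * s) * (‖p - v‖ ^ 2 + ‖p - z‖ ^ 2) ≤ Z + 1 / (2 * s) * ‖z - v‖ ^ 2 := by
  set c := 1 / (2 * s)
  have hsegment (t : ℝ) (ht : t ∈ Set.Ioc (0 : ℝ) 1) :
      P + c * (‖p - v‖ ^ 2 + (1 - t) * ‖p - z‖ ^ 2) ≤ Z + c * ‖z - v‖ ^ 2 := by
    have hconv := hΨ p z (1 - t) t (sub_nonneg.2 ht.2) ht.1.le (sub_add_cancel 1 t)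
    rw [hP, hZ] at hconv
    have hmin := (hp ((1 - t) • p + t • z)).trans (add_le_add_left hconv _)
    rw [hP] at hmin
    have hreal : P + c * ‖p - v‖ ^ 2 ≤
        (1 - t) * P + t * Z + c * ‖(1 - t) • p + t • z - v‖ ^ 2 := by exact_mod_cast hmin
    have hsplit : (1 - t) • p + t • z - v = (1 - t) • (p - v) + t • (z - v) := by module
    rw [hsplit, norm_smul_add_smul_sq, sub_sub_sub_cancel_right] at hreal
    refine le_of_mul_le_mul_left ?_ ht.1
    linarith
  have hlim : Tendsto (fun t : ℝ => P + c * (‖p - v‖ ^ 2 + (1 - t) * ‖p - z‖ ^ 2))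
      (nhdsWithin 0 (Set.Ioi 0)) (nhds (P + c * (‖p - v‖ ^ 2 + ‖p - z‖ ^ 2))) := by
    refine (Continuous.tendsto' (by fun_prop) 0 _ ?_).mono_left nhdsWithin_le_nhds
    rw [sub_zero, one_mul]
  exact le_of_tendsto hlim (eventually_of_mem (Ioc_mem_nhdsGT one_pos) hsegment)

theorem IsProxPoint.add_le {v : H} (hp : IsProxPoint Ψ s v p) (hΨ : ERealConvex Ψ) (z : H) :
    Ψ p + ((1 / (2 * s) * (‖p - v‖ ^ 2 + ‖p - z‖ ^ 2) : ℝ) : EReal) ≤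
      Ψ z + ((1 / (2 * s) * ‖z - v‖ ^ 2 : ℝ) : EReal) := by
  by_cases hz : Ψ z = ⊤
  · simp only [hz, EReal.top_add_coe, le_top]
  by_cases hbot : Ψ p = ⊥
  · simp only [hbot, EReal.bot_add, bot_le]
  have hz' : Ψ z ≠ ⊥ := fun h => by
    have := hp z
    rw [h, EReal.bot_add, le_bot_iff, EReal.add_eq_bot_iff] at this
    exact this.elim hbot (EReal.coe_ne_bot _)
  have hP := EReal.coe_toReal (ereal_ne_top_of_add_coe_le hz (hp z)) hbot
  have hZ := EReal.coe_toReal hz hz'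
  have h := hp.add_le_of_eq_coe hΨ hP.symm hZ.symm
  rw [← hP, ← hZ]
  exact_mod_cast h

-- The derivative is written with `toDualMap` because `HasGradientAt` is only defined on complete
-- spaces.
theorem IsProxPoint.forwardBackward_le {Φ : H → ℝ} {Φ' : H → H} {L : NNReal} {y : H}
    (hp : IsProxPoint Ψ s (y - s • Φ' y) p) (hΨ : ERealConvex Ψ)
    (hΦ : ConvexOn ℝ Set.univ Φ)
    (hΦ' : ∀ u, HasFDerivAt Φ (InnerProductSpace.toDualMap ℝ H (Φ' u)) u)
    (hL : LipschitzWith L Φ') (hs : 0 < s) (hsL : s * L ≤ 1) (z : H) :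
    Ψ p + ((Φ p + 1 / (2 * s) * ‖p - z‖ ^ 2 : ℝ) : EReal) ≤
      Ψ z + ((Φ z + 1 / (2 * s) * ‖y - z‖ ^ 2 : ℝ) : EReal) := by
  have hLdual : LipschitzWith L fun u => InnerProductSpace.toDualMap ℝ H (Φ' u) := by
    rw [← one_mul L]
    exact (InnerProductSpace.toDualMap ℝ H).lipschitz.comp hL
  have hdescent := le_add_fderiv_add_sq_of_lipschitzWith hΦ' hLdual y p
  have hgrad := add_fderiv_le_of_convexOn hΦ (Set.mem_univ y) (Set.mem_univ z) (hΦ' y)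
  rw [InnerProductSpace.toDualMap_apply_apply] at hdescent hgrad
  have hcurv : (L : ℝ) / 2 * ‖p - y‖ ^ 2 ≤ 1 / (2 * s) * ‖p - y‖ ^ 2 := by
    refine mul_le_mul_of_nonneg_right ?_ (sq_nonneg _)
    rw [div_le_div_iff₀ two_pos (by positivity)]
    linarith
  have hexpand (q : H) : 1 / (2 * s) * ‖q - (y - s • Φ' y)‖ ^ 2 =
      1 / (2 * s) * ‖q - y‖ ^ 2 + inner ℝ (Φ' y) (q - y) + s / 2 * ‖Φ' y‖ ^ 2 := by
    rw [sub_sub_eq_add_sub, add_sub_right_comm, norm_add_sq_real, norm_smul, mul_pow,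
      Real.norm_eq_abs, sq_abs, real_inner_smul_right, real_inner_comm]
    field_simp
  refine ereal_add_coe_le_of_sub_le_sub (hp.add_le hΨ z) ?_
  rw [mul_add, hexpand, hexpand, norm_sub_rev y z]
  linarith

end ForwardBackward

section AcceleratedDescent

/-- What the accelerated forward-backward algorithm with parameter `α` retains of the objective:
the sequence `y` extrapolates `x`, and the step from `y k` to `x (k + 1)` lowers the scaled gaps
`w k = 2s (Θ(x k) - Θ(z))` as the forward-backward inequality prescribes, both relative to `x k`
and relative to the anchor `z`. Gaps are considered from index `2` on, because `Θ` may be infinite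
at the starting points `x 0` and `x 1`. -/
structure AcceleratedDescent (α : ℝ) (x y : ℕ → H) (z : H) (w : ℕ → ℝ) : Prop where
  extrapolation : ∀ k : ℕ, 1 ≤ k →
    y k = x k + (((k : ℝ) - 1) / ((k : ℝ) + α - 1)) • (x k - x (k - 1))
  nonneg : ∀ k : ℕ, 2 ≤ k → 0 ≤ w k
  descent : ∀ k : ℕ, 2 ≤ k → w (k + 1) - w k ≤ ‖y k - x k‖ ^ 2 - ‖x (k + 1) - x k‖ ^ 2
  descent_anchor : ∀ k : ℕ, 1 ≤ k → w (k + 1) ≤ ‖y k - z‖ ^ 2 - ‖x (k + 1) - z‖ ^ 2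

/-- The quantity `δ_k` for the anchor `z`, whose convergence controls the distances `‖x k - z‖`.
At `k = 0` the index `k - 1` is truncated. -/
def anchorDelta {E : Type*} [NormedAddCommGroup E] (α : ℝ) (x : ℕ → E) (z : E) (k : ℕ) : ℝ :=
  ((k : ℝ) - 1) * (‖x k - z‖ ^ 2 - ‖x (k - 1) - z‖ ^ 2) + (α - 1) * ‖x k - z‖ ^ 2

/-- The Lyapunov function of Su, Boyd and Candès for the scaled gaps `w`, denoted `E_k` above. It
controls the summability of the gaps. -/
def anchorEnergy (α : ℝ) (x : ℕ → H) (z : H) (w : ℕ → ℝ) (k : ℕ) : ℝ :=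
  ((k : ℝ) + α - 2) ^ 2 * w k + ‖(α - 1) • (x k - z) + ((k : ℝ) - 1) • (x k - x (k - 1))‖ ^ 2

/-- The sum of potential energy `w k` and kinetic energy, weighted by the square of the time and
denoted `W_k` above. It controls the summability of the kinetic energies. -/
def mechanicalEnergy {E : Type*} [NormedAddCommGroup E] (α : ℝ) (x : ℕ → E) (w : ℕ → ℝ)
    (k : ℕ) : ℝ :=
  ((k : ℝ) + α - 2) ^ 2 * (w k + ‖x k - x (k - 1)‖ ^ 2)

variable {α : ℝ} {x y : ℕ → H} {z : H} {w : ℕ → ℝ}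

theorem mul_anchorDelta_eq (α : ℝ) (x : ℕ → H) (z : H) (k : ℕ) :
    (α - 1) * anchorDelta α x z k =
      ‖(α - 1) • (x k - z) + ((k : ℝ) - 1) • (x k - x (k - 1))‖ ^ 2 -
        ((k : ℝ) + α - 2) * ((k : ℝ) - 1) * ‖x k - x (k - 1)‖ ^ 2 := by
  rw [norm_smul_add_smul_sq, sub_sub_sub_cancel_left, anchorDelta]
  ring

namespace AcceleratedDescent

variable (hd : AcceleratedDescent α x y z w) {k : ℕ}

include hd

theorem smul_extrapolation (hα : 0 < α) (hk : 1 ≤ k) :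
    ((k : ℝ) + α - 1) • (y k - x k) = ((k : ℝ) - 1) • (x k - x (k - 1)) := by
  have hk' : (1 : ℝ) ≤ k := by exact_mod_cast hk
  rw [hd.extrapolation k hk, add_sub_cancel_left, smul_smul, mul_div_cancel₀ _ (by linarith)]

theorem anchorDelta_succ_sub_le (hα : 0 < α) (hk : 1 ≤ k) :
    anchorDelta α x z (k + 1) - anchorDelta α x z k ≤
      2 * ((k : ℝ) + α - 1) * ‖x k - x (k - 1)‖ ^ 2 := by
  have hk' : (1 : ℝ) ≤ k := by exact_mod_cast hk
  have ht : 0 < (k : ℝ) + α - 1 := by linarith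
  set β := ((k : ℝ) - 1) / ((k : ℝ) + α - 1)
  have hβt : ((k : ℝ) + α - 1) * β = k - 1 := mul_div_cancel₀ _ ht.ne'
  have hβ1 : β ≤ 1 := (div_le_one ht).2 (by linarith)
  have hy : y k - z = (1 + β) • (x k - z) + (-β) • (x (k - 1) - z) := by
    rw [hd.extrapolation k hk]
    module
  have hclose : ‖x (k + 1) - z‖ ^ 2 ≤ ‖y k - z‖ ^ 2 := by
    linarith [hd.descent_anchor k hk, hd.nonneg (k + 1) (by omega)]
  rw [hy, norm_smul_add_smul_sq, sub_sub_sub_cancel_right] at hclose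
  set A' := ‖x (k + 1) - z‖ ^ 2
  set A := ‖x k - z‖ ^ 2
  set A₀ := ‖x (k - 1) - z‖ ^ 2
  set B := ‖x k - x (k - 1)‖ ^ 2
  calc anchorDelta α x z (k + 1) - anchorDelta α x z k
      = ((k : ℝ) + α - 1) * (A' - A) - (k - 1) * (A - A₀) := by
        simp only [anchorDelta, Nat.cast_add_one, Nat.add_sub_cancel]
        ring
    _ ≤ ((k : ℝ) + α - 1) * (β * (A - A₀) + β * (1 + β) * B) - (k - 1) * (A - A₀) := by
        gcongr
        linarith
    _ = ((k : ℝ) + α - 1) * (β * (1 + β)) * B := by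
        rw [← hβt]
        ring
    _ ≤ ((k : ℝ) + α - 1) * (1 * (1 + 1)) * B := by gcongr
    _ = 2 * ((k : ℝ) + α - 1) * B := by ring

-- With `N q = ‖(α - 1)(q - z) + k (q - x_k)‖²`, the squared norms in the energies at times `k + 1`
-- and `k` are `N x_{k+1}` and `N y_k`, and `norm_smul_add_smul_sq` evaluates their difference.
theorem anchorEnergy_succ_add_le (hα : 1 ≤ α) (hk : 2 ≤ k) :
    anchorEnergy α x z w (k + 1) + (α - 3) * (((k : ℝ) + α - 1) * w k) ≤
      anchorEnergy α x z w k := by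
  have hext := hd.smul_extrapolation (by linarith) (by omega : 1 ≤ k)
  have hcurrent : (α - 1) • (x k - z) + ((k : ℝ) - 1) • (x k - x (k - 1)) =
      (α - 1) • (y k - z) + (k : ℝ) • (y k - x k) := by
    rw [← hext]
    module
  have hdrop : ((k : ℝ) + α - 1) *
      ((α - 1) * (w (k + 1) - (‖y k - z‖ ^ 2 - ‖x (k + 1) - z‖ ^ 2)) +
        k * (w (k + 1) - w k - (‖y k - x k‖ ^ 2 - ‖x (k + 1) - x k‖ ^ 2))) ≤ 0 := by
    refine mul_nonpos_of_nonneg_of_nonpos (by linarith [k.cast_nonneg (α := ℝ)])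
      (add_nonpos ?_ ?_)
    · exact mul_nonpos_of_nonneg_of_nonpos (by linarith)
        (sub_nonpos.2 (hd.descent_anchor k (by omega)))
    · exact mul_nonpos_of_nonneg_of_nonpos k.cast_nonneg (sub_nonpos.2 (hd.descent k hk))
  simp only [anchorEnergy, hcurrent, Nat.cast_add_one, Nat.add_sub_cancel, add_sub_cancel_right,
    norm_smul_add_smul_sq, sub_sub_sub_cancel_left]
  linarith [hd.nonneg k hk]

theorem mechanicalEnergy_succ_add_le (hα : 3 ≤ α) (hk : 2 ≤ k) :
    mechanicalEnergy α x w (k + 1) + 2 * (((k : ℝ) + α - 1) * ‖x k - x (k - 1)‖ ^ 2) ≤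
      mechanicalEnergy α x w k + 2 * (((k : ℝ) + α - 1) * w k) := by
  have hk' : (2 : ℝ) ≤ k := by exact_mod_cast hk
  have hext : ((k : ℝ) + α - 1) ^ 2 * ‖y k - x k‖ ^ 2 =
      ((k : ℝ) - 1) ^ 2 * ‖x k - x (k - 1)‖ ^ 2 := by
    have h := congrArg (‖·‖ ^ 2) (hd.smul_extrapolation (by linarith) (by omega : 1 ≤ k))
    simpa only [norm_smul, mul_pow, Real.norm_eq_abs, sq_abs] using h
  have hdescent := mul_le_mul_of_nonneg_left (hd.descent k hk) (sq_nonneg ((k : ℝ) + α - 1))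
  have hfriction : (((k : ℝ) - 1) ^ 2 + 2 * ((k : ℝ) + α - 1)) * ‖x k - x (k - 1)‖ ^ 2 ≤
      ((k : ℝ) + α - 2) ^ 2 * ‖x k - x (k - 1)‖ ^ 2 := by
    gcongr
    nlinarith
  simp only [mechanicalEnergy, Nat.cast_add_one, Nat.add_sub_cancel]
  linarith [hd.nonneg k hk]

theorem neg_mechanicalEnergy_le_mul_anchorDelta (hα : 1 ≤ α) (hk : 2 ≤ k) :
    -mechanicalEnergy α x w k ≤ (α - 1) * anchorDelta α x z k := by
  have hk' : (2 : ℝ) ≤ k := by exact_mod_cast hk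
  have hw : 0 ≤ ((k : ℝ) + α - 2) ^ 2 * w k := mul_nonneg (sq_nonneg _) (hd.nonneg k hk)
  have hkinetic : ((k : ℝ) + α - 2) * ((k : ℝ) - 1) * ‖x k - x (k - 1)‖ ^ 2 ≤
      ((k : ℝ) + α - 2) ^ 2 * ‖x k - x (k - 1)‖ ^ 2 := by
    rw [sq ((k : ℝ) + α - 2)]
    have hle : (k : ℝ) - 1 ≤ k + α - 2 := by linarith
    gcongr
    linarith
  rw [mul_anchorDelta_eq, mechanicalEnergy, mul_add]
  linarith [sq_nonneg ‖(α - 1) • (x k - z) + ((k : ℝ) - 1) • (x k - x (k - 1))‖]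

theorem summable_mul_gap (hα : 3 < α) : Summable fun k : ℕ => ((k : ℝ) + α - 1) * w k := by
  have hnonneg : ∀ᶠ k in atTop, 0 ≤ w k := eventually_atTop.2 ⟨2, hd.nonneg⟩
  have hsum := (exists_tendsto_and_summable_of_eventually_add_le (m := 0)
    (a := anchorEnergy α x z w) (b := fun k => (α - 3) * (((k : ℝ) + α - 1) * w k))
    (hnonneg.mono fun k hw => add_nonneg (mul_nonneg (sq_nonneg _) hw) (sq_nonneg _))
    (hnonneg.mono fun k hw => mul_nonneg (by linarith) <|
      mul_nonneg (by linarith [k.cast_nonneg (α := ℝ)]) hw)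
    summable_zero
    (eventually_atTop.2 ⟨2, fun k hk => by
      simpa only [add_zero] using hd.anchorEnergy_succ_add_le (by linarith) hk⟩)).2
  exact (summable_mul_left_iff (sub_pos.2 hα).ne').1 hsum

theorem exists_tendsto_mechanicalEnergy_and_summable (hα : 3 < α) :
    (∃ l, Tendsto (mechanicalEnergy α x w) atTop (nhds l)) ∧
      Summable fun k : ℕ => 2 * (((k : ℝ) + α - 1) * ‖x k - x (k - 1)‖ ^ 2) :=
  exists_tendsto_and_summable_of_eventually_add_le (m := 0)
    (eventually_atTop.2 ⟨2, fun k hk =>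
      mul_nonneg (sq_nonneg _) (add_nonneg (hd.nonneg k hk) (sq_nonneg _))⟩)
    (Eventually.of_forall fun k => mul_nonneg two_pos.le <|
      mul_nonneg (by linarith [k.cast_nonneg (α := ℝ)]) (sq_nonneg _))
    ((hd.summable_mul_gap hα).mul_left 2)
    (eventually_atTop.2 ⟨2, fun _ hk => hd.mechanicalEnergy_succ_add_le hα.le hk⟩)

theorem exists_tendsto_anchorDelta (hα : 3 < α) :
    ∃ l, Tendsto (anchorDelta α x z) atTop (nhds l) := by
  obtain ⟨⟨l, hl⟩, hsum⟩ := hd.exists_tendsto_mechanicalEnergy_and_summable hα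
  obtain ⟨M, hM⟩ := hl.bddAbove_range
  have hα1 : 0 < α - 1 := by linarith
  have hlower (k : ℕ) (hk : 2 ≤ k) : -M / (α - 1) ≤ anchorDelta α x z k := by
    rw [div_le_iff₀' hα1]
    exact (neg_le_neg (hM (Set.mem_range_self k))).trans
      (hd.neg_mechanicalEnergy_le_mul_anchorDelta (by linarith) hk)
  have hstep (k : ℕ) (hk : 1 ≤ k) : anchorDelta α x z (k + 1) + 0 ≤
      anchorDelta α x z k + 2 * (((k : ℝ) + α - 1) * ‖x k - x (k - 1)‖ ^ 2) := by
    linarith [hd.anchorDelta_succ_sub_le (by linarith) hk]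
  exact (exists_tendsto_and_summable_of_eventually_add_le (b := fun _ => 0)
    (eventually_atTop.2 ⟨2, hlower⟩) (Eventually.of_forall fun _ => le_rfl) hsum
    (eventually_atTop.2 ⟨1, hstep⟩)).1

end AcceleratedDescent

end AcceleratedDescent

section Algorithm

variable {Ψ : H → EReal} {Φ : H → ℝ} {Φ' : H → H} {L : NNReal} {s α : ℝ} {x y : ℕ → H} {z : H}

theorem acceleratedDescent_of_isProxPoint
    (hΨ_ne_bot : ∀ u, Ψ u ≠ ⊥) (hΨ_proper : ∃ u, Ψ u ≠ ⊤) (hΨ_convex : ERealConvex Ψ)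
    (hΦ_convex : ConvexOn ℝ Set.univ Φ)
    (hΦ_diff : ∀ u, HasFDerivAt Φ (InnerProductSpace.toDualMap ℝ H (Φ' u)) u)
    (hΦ_lip : LipschitzWith L Φ') (hs : 0 < s) (hsL : s * L ≤ 1)
    (hy : ∀ k : ℕ, 1 ≤ k →
      y k = x k + (((k : ℝ) - 1) / ((k : ℝ) + α - 1)) • (x k - x (k - 1)))
    (hx : ∀ k : ℕ, 1 ≤ k → IsProxPoint Ψ s (y k - s • Φ' (y k)) (x (k + 1)))
    (hz : ∀ u, Ψ z + (Φ z : EReal) ≤ Ψ u + (Φ u : EReal)) :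
    AcceleratedDescent α x y z
      fun k => 2 * s * ((Ψ (x k)).toReal + Φ (x k) - ((Ψ z).toReal + Φ z)) := by
  obtain ⟨u₀, hu₀⟩ := hΨ_proper
  have hz_top : Ψ z ≠ ⊤ := ereal_ne_top_of_add_coe_le hu₀ (hz u₀)
  have hx_top (k : ℕ) (hk : 2 ≤ k) : Ψ (x k) ≠ ⊤ := by
    obtain ⟨j, rfl⟩ := Nat.exists_eq_add_of_le' (one_le_two.trans hk)
    exact ereal_ne_top_of_add_coe_le hu₀ (hx j (by omega) u₀)
  have hstep (k : ℕ) (hk : 1 ≤ k) (u : H) (hu : Ψ u ≠ ⊤) :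
      2 * s * ((Ψ (x (k + 1))).toReal + Φ (x (k + 1)) - ((Ψ u).toReal + Φ u)) ≤
        ‖y k - u‖ ^ 2 - ‖x (k + 1) - u‖ ^ 2 := by
    have h := ereal_toReal_add_le (hΨ_ne_bot _) hu
      ((hx k hk).forwardBackward_le hΨ_convex hΦ_convex hΦ_diff hΦ_lip hs hsL u)
    rw [← le_div_iff₀' (by positivity), div_eq_inv_mul, inv_eq_one_div]
    linarith
  refine ⟨hy, fun k hk => ?_, fun k hk => ?_, fun k hk => hstep k hk z hz_top⟩
  · exact mul_nonneg (by positivity)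
      (sub_nonneg.2 (ereal_toReal_add_le (hΨ_ne_bot z) (hx_top k hk) (hz (x k))))
  · simpa only [← mul_sub, sub_sub_sub_cancel_right] using
      hstep k (by omega) (x k) (hx_top k hk)

theorem fista_delta_inequality_and_limit_general
    (hΨ_ne_bot : ∀ u, Ψ u ≠ ⊥) (hΨ_proper : ∃ u, Ψ u ≠ ⊤) (hΨ_convex : ERealConvex Ψ)
    (hΦ_convex : ConvexOn ℝ Set.univ Φ)
    (hΦ_diff : ∀ u, HasFDerivAt Φ (InnerProductSpace.toDualMap ℝ H (Φ' u)) u)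
    (hΦ_lip : LipschitzWith L Φ') (hα : 3 < α) (hs : 0 < s) (hsL : s * L ≤ 1)
    (hy : ∀ k : ℕ, 1 ≤ k →
      y k = x k + (((k : ℝ) - 1) / ((k : ℝ) + α - 1)) • (x k - x (k - 1)))
    (hx : ∀ k : ℕ, 1 ≤ k → IsProxPoint Ψ s (y k - s • Φ' (y k)) (x (k + 1)))
    (hz : ∀ u, Ψ z + (Φ z : EReal) ≤ Ψ u + (Φ u : EReal)) :
    (∀ k : ℕ, 1 ≤ k → anchorDelta α x z (k + 1) - anchorDelta α x z k ≤
        2 * ((k : ℝ) + α - 1) * ‖x k - x (k - 1)‖ ^ 2) ∧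
      ∃ l : ℝ, Tendsto (anchorDelta α x z) atTop (nhds l) := by
  have hd := acceleratedDescent_of_isProxPoint hΨ_ne_bot hΨ_proper hΨ_convex hΦ_convex hΦ_diff
    hΦ_lip hs hsL hy hx hz
  exact ⟨fun _ hk => hd.anchorDelta_succ_sub_le (by linarith) hk, hd.exists_tendsto_anchorDelta hα⟩

end Algorithm

end InnerProductSpaces

/-- `δ_{k+1} - δ_k ≤ 2(k+α-1)‖x_k-x_{k-1}‖²` and `lim δ_k` exists. -/
theorem fista_delta_inequality_and_limit
    {H : Type*} [NormedAddCommGroup H] [InnerProductSpace ℝ H] [CompleteSpace H]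
    (Ψ : H → EReal) (Φ : H → ℝ) (Φ' : H → H) (L s α : ℝ)
    (hΨ_ne_bot : ∀ u, Ψ u ≠ ⊥) (hΨ_proper : ∃ u, Ψ u ≠ ⊤)
    (hΨ_lsc : LowerSemicontinuous Ψ)
    (hΨ_convex : ∀ u v : H, ∀ a b : ℝ, 0 ≤ a → 0 ≤ b → a + b = 1 →
      Ψ (a • u + b • v) ≤ (a : EReal) * Ψ u + (b : EReal) * Ψ v)
    (hΦ_convex : ConvexOn ℝ Set.univ Φ)
    (hΦ_diff : ∀ u, HasGradientAt Φ (Φ' u) u)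
    (hΦ_lip : LipschitzWith (Real.toNNReal L) Φ')
    (hα : 3 < α) (hs : 0 < s) (hsL : s < 1 / L)
    (x y : ℕ → H)
    (hy : ∀ k : ℕ, 1 ≤ k →
      y k = x k + (((k : ℝ) - 1) / ((k : ℝ) + α - 1)) • (x k - x (k - 1)))
    (hx : ∀ k : ℕ, 1 ≤ k → ∀ u : H,
      Ψ (x (k + 1)) + ((1 / (2 * s) * ‖x (k + 1) - (y k - s • Φ' (y k))‖ ^ 2 : ℝ) : EReal)
        ≤ Ψ u + ((1 / (2 * s) * ‖u - (y k - s • Φ' (y k))‖ ^ 2 : ℝ) : EReal))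
    (xstar : H)
    (hxstar : ∀ u, Ψ xstar + (Φ xstar : EReal) ≤ Ψ u + (Φ u : EReal)) :
    (∀ k : ℕ, 1 ≤ k →
        ((((k + 1) : ℝ) - 1) * (‖x (k + 1) - xstar‖ ^ 2 - ‖x ((k + 1) - 1) - xstar‖ ^ 2) + (α - 1) * ‖x (k + 1) - xstar‖ ^ 2) - (((k : ℝ) - 1) * (‖x k - xstar‖ ^ 2 - ‖x (k - 1) - xstar‖ ^ 2) + (α - 1) * ‖x k - xstar‖ ^ 2) ≤ 2 * ((k : ℝ) + α - 1) * ‖x k - x (k - 1)‖ ^ 2) ∧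
      ∃ l : ℝ, Tendsto (fun k : ℕ => (((k : ℝ) - 1) * (‖x k - xstar‖ ^ 2 - ‖x (k - 1) - xstar‖ ^ 2) + (α - 1) * ‖x k - xstar‖ ^ 2)) atTop (nhds l) := by
  have hL : 0 < L := one_div_pos.1 (hs.trans hsL)
  have hsL' : s * L.toNNReal ≤ 1 := by
    rw [Real.coe_toNNReal L hL.le]
    exact ((lt_div_iff₀ hL).1 hsL).le
  obtain ⟨hstep, hlim⟩ := fista_delta_inequality_and_limit_general hΨ_ne_bot hΨ_proper hΨ_convex
    hΦ_convex (fun u => (hΦ_diff u).hasFDerivAt) hΦ_lip hα hs hsL' hy hx hxstar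
  exact ⟨by simpa only [anchorDelta, Nat.cast_add_one] using hstep, hlim⟩
end
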